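/- arXiv:2106.04818 — 3 statements merged into one kernel-verified Lean document; each statement's English description precedes it below -/
import Mathlib

section
/- Let p be a prime, let G₁ and G₂ be finite groups with Sylow p-subgroups P₁ ≤ G₁ and P₂ ≤ G₂, and set G = G₁ × G₂ and P = P₁ × P₂ (a Sylow p-subgroup of G). Assume that for i = 1, 2 and every irreducible character χᵢ of Gᵢ, the restriction (χᵢ)_{Pᵢ} is an integral linear combination of characters of the form λ^{Pᵢ} induced from irreducible characters λ of subgroups Q ≤ Pᵢ with χᵢ(1)_p = |Pᵢ : Q|. Then for every irreducible character χ of G, the restriction χ_P is an integral linear combination of characters of the form λ^P induced from irreducible characters λ of subgroups Q ≤ P with χ(1)_p = |P : Q|. -/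
open scoped Classical

/-- The induced character (as a class function formula): for `f` a function on a
subgroup `H` of a finite group `G`, `inducedChar H f g = (1/|H|) ∑_{x ∈ G, xgx⁻¹ ∈ H} f (xgx⁻¹)`. -/
noncomputable def inducedChar {G : Type*} [Group G] [Fintype G] (H : Subgroup G)
    (f : H → ℂ) : G → ℂ :=
  fun g => (Fintype.card H : ℂ)⁻¹ *
    ∑ x : G, if h : x * g * x⁻¹ ∈ H then f ⟨x * g * x⁻¹, h⟩ else 0

/-- `χ` is the character of an irreducible complex representation of `G`. -/
def IsIrreducibleCharacter {G : Type} [Group G] (χ : G → ℂ) : Prop :=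
  ∃ V : FDRep ℂ G, CategoryTheory.Simple V ∧ χ = FDRep.character V

/-- The restriction of `χ` (a character of degree `d` of the ambient group `G`) to the
subgroup `P` is an integral (ℤ-) linear combination of characters `λ^P` induced from
irreducible characters `λ` of subgroups `Q ≤ P` satisfying `d_p = |P : Q|`. -/
def ZSumInducedProperty (p : ℕ) {G : Type} [Group G] [Fintype G] (P : Subgroup G)
    (χ : G → ℂ) (d : ℕ) : Prop :=
  ∃ (n : ℕ) (c : Fin n → ℤ) (Q : Fin n → Subgroup ↥P)
    (lam : (i : Fin n) → ↥(Q i) → ℂ),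
    (∀ i, IsIrreducibleCharacter (lam i)) ∧
    (∀ i, p ^ (d.factorization p) = (Q i).index) ∧
    (∀ x : ↥P, χ ↑x = ∑ i, (c i : ℂ) * inducedChar (Q i) (lam i) x)

/-!
Every irreducible representation `V` of `G₁ × G₂` is an external tensor product `V₁ ⊠ V₂`: if `V₁`
is an irreducible subrepresentation of `V` restricted to `G₁` and `V₂` is an irreducible
subrepresentation of the `G₂`-representation `Hom_{G₁}(V₁, V)`, then evaluation `V₁ ⊠ V₂ → V` is a
nonzero map between irreducible representations. Hence `χ = χ₁ × χ₂` and `χ(1)_p = χ₁(1)_p χ₂(1)_p`,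
while induction, irreducibility and indices are all multiplicative in
`(λ₁ × λ₂)^{P₁ × P₂} = λ₁^{P₁} × λ₂^{P₂}`.
-/

open CategoryTheory MonoidalCategory Limits
open Representation (IntertwiningMap)
open scoped TensorProduct

universe u v w

section HomTensorAdjunction

variable {k G₁ G₂ U V W : Type*} [CommSemiring k] [Monoid G₁] [Monoid G₂]
  [AddCommMonoid U] [AddCommMonoid V] [AddCommMonoid W] [Module k U] [Module k V] [Module k W]

/-- The endomorphism of `σ` restricted to `G₁` given by the action of an element of `G₂`. -/
def sndIntertwiningMap (σ : Representation k (G₁ × G₂) W) (g : G₂) :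
    IntertwiningMap (σ.comp (MonoidHom.inl G₁ G₂)) (σ.comp (MonoidHom.inl G₁ G₂)) where
  toLinearMap := σ (1, g)
  isIntertwining' h := by simp [← Module.End.mul_eq_comp, ← map_mul]

/-- The representation of `G₂` on `Hom_{G₁}(U, W)` by postcomposition, for a representation `W` of
`G₁ × G₂`. -/
def homRepresentation (ρ : Representation k G₁ U) (σ : Representation k (G₁ × G₂) W) :
    Representation k G₂ (IntertwiningMap ρ (σ.comp (MonoidHom.inl G₁ G₂))) where
  toFun g := IntertwiningMap.llcomp _ _ _ (sndIntertwiningMap σ g)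
  map_one' := by
    ext f u
    exact LinearMap.congr_fun (map_one σ) (f u)
  map_mul' g h := by
    ext f u
    have hmul : ((1, g * h) : G₁ × G₂) = (1, g) * (1, h) := by simp
    exact LinearMap.congr_fun (hmul ▸ map_mul σ (1, g) (1, h)) (f u)

/-- The evaluation map `U ⊠ V → W` adjoint to a `G₂`-equivariant map `V → Hom_{G₁}(U, W)`. -/
noncomputable def uncurryIntertwiningMap {ρ : Representation k G₁ U} {τ : Representation k G₂ V}
    {σ : Representation k (G₁ × G₂) W} (φ : IntertwiningMap τ (homRepresentation ρ σ)) :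
    IntertwiningMap
      (Representation.tprod (ρ.comp (MonoidHom.fst G₁ G₂)) (τ.comp (MonoidHom.snd G₁ G₂))) σ where
  toLinearMap := TensorProduct.lift (IntertwiningMap.toLinearMapl _ _ ∘ₗ φ.toLinearMap).flip
  isIntertwining' := by
    rintro ⟨g, h⟩
    ext u v
    have hφ : φ (τ h v) = homRepresentation ρ σ h (φ v) := IntertwiningMap.isIntertwining _ _ φ h v
    have hgh : ((g, h) : G₁ × G₂) = (1, h) * (g, 1) := by simp
    calc φ (τ h v) (ρ g u) = σ (1, h) (φ v (ρ g u)) := by rw [hφ]; rfl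
      _ = σ (1, h) (σ (g, 1) (φ v u)) := congrArg _ (IntertwiningMap.isIntertwining _ _ (φ v) g u)
      _ = σ (g, h) (φ v u) := by rw [hgh, map_mul]; rfl

theorem uncurryIntertwiningMap_ne_zero {ρ : Representation k G₁ U} {τ : Representation k G₂ V}
    {σ : Representation k (G₁ × G₂) W} {φ : IntertwiningMap τ (homRepresentation ρ σ)}
    (hφ : φ ≠ 0) : uncurryIntertwiningMap φ ≠ 0 := by
  contrapose! hφ
  ext v u
  exact congrArg (fun f : IntertwiningMap _ σ => f (u ⊗ₜ v)) hφ

end HomTensorAdjunction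

section FDRep

variable {k : Type u} [Field k]

section Simple

variable {G : Type v} [Monoid G]

/-- Morphisms of `FDRep k G` are the same as intertwining maps. -/
noncomputable def homEquivIntertwiningMap (V W : FDRep k G) :
    (V ⟶ W) ≃ₗ[k] IntertwiningMap V.ρ W.ρ :=
  (FDRep.forget₂HomLinearEquiv V W).symm.trans (Rep.homLinearEquiv _ _)

theorem isZero_iff_subsingleton (V : FDRep k G) : IsZero V ↔ Subsingleton V := by
  rw [IsZero.iff_id_eq_zero, ← (homEquivIntertwiningMap V V).map_eq_zero_iff]
  constructor
  · intro h
    exact subsingleton_of_forall_eq 0 fun v => congrArg (fun f : IntertwiningMap V.ρ V.ρ => f v) h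
  · intro _
    ext v
    exact Subsingleton.elim _ _

theorem finrank_ne_zero_of_simple (V : FDRep k G) [Simple V] : Module.finrank k V ≠ 0 := by
  rw [Ne, Module.finrank_zero_iff, ← isZero_iff_subsingleton]
  exact Simple.not_isZero V

theorem injective_homEquivIntertwiningMap_of_mono {V W : FDRep k G} (f : V ⟶ W) [Mono f] :
    Function.Injective (homEquivIntertwiningMap V W f) :=
  (Rep.mono_iff_injective ((forget₂ (FDRep k G) (Rep k G)).map f)).1 inferInstance

theorem isIso_of_mono_of_finrank_le {V W : FDRep k G} (f : V ⟶ W) [Mono f]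
    (h : Module.finrank k W ≤ Module.finrank k V) : IsIso f := by
  have hinj := injective_homEquivIntertwiningMap_of_mono f
  have hrank := h.antisymm' (LinearMap.finrank_le_finrank_of_injective hinj)
  have hsurj := (LinearMap.injective_iff_surjective_of_finrank_eq_finrank hrank).1 hinj
  have hepi := (Rep.epi_iff_surjective ((forget₂ (FDRep k G) (Rep k G)).map f)).2 hsurj
  have := (forget₂ (FDRep k G) (Rep k G)).epi_of_epi_map hepi
  exact isIso_of_mono_of_epi f

theorem strictMono_finrank_subobject (V : FDRep k G) :
    StrictMono fun S : Subobject V => Module.finrank k (S : FDRep k G) := by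
  intro S T hST
  by_contra! hle
  have := isIso_of_mono_of_finrank_le (S.ofLE T hST.le) hle
  exact hST.not_ge (Subobject.le_of_comm (inv (S.ofLE T hST.le)) (by simp))

instance isArtinianObject_fdRep (V : FDRep k G) : IsArtinianObject V :=
  ⟨(strictMono_finrank_subobject V).wellFoundedLT⟩

theorem exists_simple_hom_ne_zero {V : FDRep k G} (hV : ¬ IsZero V) :
    ∃ (S : FDRep k G) (f : S ⟶ V), Simple S ∧ f ≠ 0 := by
  obtain ⟨S, hS⟩ := exists_simple_subobject hV
  exact ⟨S, S.arrow, hS, fun h => Simple.not_isZero (S : FDRep k G) (IsZero.of_mono_eq_zero _ h)⟩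

end Simple

section ExternalTensor

variable {G₁ : Type v} {G₂ : Type w} [Monoid G₁] [Monoid G₂]

/-- The external tensor product `V ⊠ W`, a representation of `G₁ × G₂`. -/
noncomputable def externalTensor (V : FDRep k G₁) (W : FDRep k G₂) : FDRep k (G₁ × G₂) :=
  (Action.res _ (MonoidHom.fst G₁ G₂)).obj V ⊗ (Action.res _ (MonoidHom.snd G₁ G₂)).obj W

theorem character_externalTensor (V : FDRep k G₁) (W : FDRep k G₂) (g : G₁ × G₂) :
    (externalTensor V W).character g = V.character g.1 * W.character g.2 := by
  rw [externalTensor, FDRep.char_tensor]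
  rfl

theorem finrank_externalTensor (V : FDRep k G₁) (W : FDRep k G₂) :
    Module.finrank k (externalTensor V W) = Module.finrank k V * Module.finrank k W :=
  Module.finrank_tensorProduct (R := k) (S := k) (M := V) (M' := W)

/-- The evaluation map `V₁ ⊠ V₂ ⟶ V` adjoint to a morphism `V₂ ⟶ Hom_{G₁}(V₁, V)`. -/
noncomputable def externalTensorDesc {V₁ : FDRep k G₁} {V₂ : FDRep k G₂}
    {V : FDRep k (G₁ × G₂)} (φ : V₂ ⟶ FDRep.of (homRepresentation V₁.ρ V.ρ)) :
    externalTensor V₁ V₂ ⟶ V :=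
  (homEquivIntertwiningMap (externalTensor V₁ V₂) V).symm
    (uncurryIntertwiningMap (ρ := V₁.ρ) (τ := V₂.ρ) (σ := V.ρ)
      (homEquivIntertwiningMap V₂ (FDRep.of (homRepresentation V₁.ρ V.ρ)) φ))

theorem externalTensorDesc_ne_zero {V₁ : FDRep k G₁} {V₂ : FDRep k G₂}
    {V : FDRep k (G₁ × G₂)} {φ : V₂ ⟶ FDRep.of (homRepresentation V₁.ρ V.ρ)} (hφ : φ ≠ 0) :
    externalTensorDesc φ ≠ 0 :=
  (LinearEquiv.map_ne_zero_iff _).2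
    (uncurryIntertwiningMap_ne_zero ((LinearEquiv.map_ne_zero_iff _).2 hφ))

theorem exists_externalTensor_hom_ne_zero {V₁ : FDRep k G₁}
    {V : FDRep k (G₁ × G₂)} {f : V₁ ⟶ (Action.res _ (MonoidHom.inl G₁ G₂)).obj V} (hf : f ≠ 0) :
    ∃ (V₂ : FDRep k G₂) (ev : externalTensor V₁ V₂ ⟶ V), Simple V₂ ∧ ev ≠ 0 := by
  have hH : ¬ IsZero (FDRep.of (homRepresentation V₁.ρ V.ρ)) := by
    rw [isZero_iff_subsingleton]
    intro (hsub : Subsingleton (IntertwiningMap V₁.ρ (V.ρ.comp (MonoidHom.inl G₁ G₂))))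
    exact hf ((homEquivIntertwiningMap V₁ _).injective (hsub.elim _ _))
  obtain ⟨V₂, φ, hV₂, hφ⟩ := exists_simple_hom_ne_zero hH
  exact ⟨V₂, externalTensorDesc φ, hV₂, externalTensorDesc_ne_zero hφ⟩

end ExternalTensor

section Irreducible

variable [IsAlgClosed k] [CharZero k] {G₁ G₂ : Type u} [Group G₁] [Group G₂] [Finite G₁] [Finite G₂]

instance simple_externalTensor (V : FDRep k G₁) (W : FDRep k G₂) [hV : Simple V] [hW : Simple W] :
    Simple (externalTensor V W) := by
  have := Fintype.ofFinite G₁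
  have := Fintype.ofFinite G₂
  rw [FDRep.simple_iff_char_is_norm_one] at hV hW ⊢
  rw [Nat.card_prod, Nat.cast_mul, ← hV, ← hW, Finset.sum_mul_sum, Fintype.sum_prod_type]
  simp only [character_externalTensor, Prod.fst_inv, Prod.snd_inv, mul_mul_mul_comm]

theorem exists_iso_externalTensor (V : FDRep k (G₁ × G₂)) [Simple V] :
    ∃ (V₁ : FDRep k G₁) (V₂ : FDRep k G₂),
      Simple V₁ ∧ Simple V₂ ∧ Nonempty (externalTensor V₁ V₂ ≅ V) := by
  let resV : FDRep k G₁ := (Action.res _ (MonoidHom.inl G₁ G₂)).obj V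
  have hresV : ¬ IsZero resV := fun h =>
    Simple.not_isZero V ((isZero_iff_subsingleton V).2 ((isZero_iff_subsingleton resV).1 h))
  obtain ⟨V₁, f, hV₁, hf⟩ := exists_simple_hom_ne_zero hresV
  obtain ⟨V₂, ev, hV₂, hev⟩ := exists_externalTensor_hom_ne_zero hf
  have := isIso_of_hom_simple hev
  exact ⟨V₁, V₂, hV₁, hV₂, ⟨asIso ev⟩⟩

end Irreducible

end FDRep

theorem IsIrreducibleCharacter.comp_mulEquiv {G H : Type} [Group G] [Group H] {χ : G → ℂ}
    (hχ : IsIrreducibleCharacter χ) (e : H ≃* G) : IsIrreducibleCharacter (χ ∘ e) := by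
  obtain ⟨V, _, rfl⟩ := hχ
  exact ⟨(Action.resEquiv _ e).functor.obj V, simple_obj _ V, rfl⟩

/-- The external product `(f₁ × f₂)(a, b) = f₁ a * f₂ b` of functions, as a bilinear map. -/
def externalProduct (R A B : Type*) [Ring R] :
    (A → R) →ₗ[ℤ] (B → R) →ₗ[ℤ] (A × B → R) :=
  (LinearMap.mul ℤ (A × B → R)).compl₁₂ (LinearMap.funLeft ℤ R Prod.fst)
    (LinearMap.funLeft ℤ R Prod.snd)

@[simp]
theorem externalProduct_apply {R A B : Type*} [Ring R] (f₁ : A → R) (f₂ : B → R) (x : A × B) :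
    externalProduct R A B f₁ f₂ x = f₁ x.1 * f₂ x.2 :=
  rfl

theorem IsIrreducibleCharacter.externalProduct {A B : Type} [Group A] [Group B] [Finite A]
    [Finite B] {χ₁ : A → ℂ} {χ₂ : B → ℂ} (h₁ : IsIrreducibleCharacter χ₁)
    (h₂ : IsIrreducibleCharacter χ₂) : IsIrreducibleCharacter (externalProduct ℂ A B χ₁ χ₂) := by
  obtain ⟨V₁, _, rfl⟩ := h₁
  obtain ⟨V₂, _, rfl⟩ := h₂
  exact ⟨externalTensor V₁ V₂, inferInstance, (funext (character_externalTensor V₁ V₂)).symm⟩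

section InducedCharacter

variable {G H : Type*} [Group G] [Group H] [Fintype G] [Fintype H]

theorem inducedChar_map_mulEquiv (e : G ≃* H) (Q : Subgroup G) (f : Q → ℂ) :
    inducedChar (Q.map (e : G →* H)) (f ∘ (e.subgroupMap Q).symm) = inducedChar Q f ∘ e.symm := by
  ext h
  obtain ⟨g, rfl⟩ := e.surjective h
  have hconj (x : G) : e x * e g * (e x)⁻¹ = e (x * g * x⁻¹) := by simp
  have hmem (y : G) : e y ∈ Q.map (e : G →* H) ↔ y ∈ Q := Subgroup.mem_map_equiv.trans (by simp)
  simp only [inducedChar, Function.comp_apply, e.symm_apply_apply]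
  rw [← Fintype.card_congr (e.subgroupMap Q).toEquiv, ← Equiv.sum_comp e.toEquiv]
  congr 1
  refine Finset.sum_congr rfl fun x _ => ?_
  simp only [MulEquiv.toEquiv_eq_coe, MulEquiv.coe_toEquiv, hconj]
  refine dite_congr (propext (hmem _)) (fun hx => ?_) fun _ => rfl
  exact congrArg f ((e.subgroupMap Q).symm_apply_eq.2 rfl)

theorem inducedChar_prod (Q₁ : Subgroup G) (Q₂ : Subgroup H) (f₁ : Q₁ → ℂ) (f₂ : Q₂ → ℂ) :
    inducedChar (Q₁.prod Q₂) (externalProduct ℂ Q₁ Q₂ f₁ f₂ ∘ Subgroup.prodEquiv Q₁ Q₂) =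
      externalProduct ℂ G H (inducedChar Q₁ f₁) (inducedChar Q₂ f₂) := by
  ext ⟨g, h⟩
  simp only [inducedChar, externalProduct_apply]
  rw [Fintype.card_congr (Subgroup.prodEquiv Q₁ Q₂).toEquiv, Fintype.card_prod, Nat.cast_mul,
    mul_inv, mul_mul_mul_comm, Finset.sum_mul_sum, ← Fintype.sum_prod_type']
  congr 1
  refine Finset.sum_congr rfl fun x _ => ?_
  have hmem : x * (g, h) * x⁻¹ ∈ Q₁.prod Q₂ ↔
      x.1 * g * x.1⁻¹ ∈ Q₁ ∧ x.2 * h * x.2⁻¹ ∈ Q₂ := Subgroup.mem_prod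
  by_cases h₁ : x.1 * g * x.1⁻¹ ∈ Q₁
  · by_cases h₂ : x.2 * h * x.2⁻¹ ∈ Q₂
    · rw [dif_pos h₁, dif_pos h₂, dif_pos (hmem.2 ⟨h₁, h₂⟩)]
      rfl
    · rw [dif_neg h₂, dif_neg fun hx => h₂ (hmem.1 hx).2, mul_zero]
  · rw [dif_neg h₁, dif_neg fun hx => h₁ (hmem.1 hx).1, zero_mul]

end InducedCharacter

section InducedSpan

variable {G H : Type} [Group G] [Group H] [Fintype G] [Fintype H]

/-- The integral linear combinations of the characters `λ^G` induced from irreducible characters `λ`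
of subgroups of index `m` in `G`. -/
def inducedSpan (G : Type) [Group G] [Fintype G] (m : ℕ) : Submodule ℤ (G → ℂ) :=
  Submodule.span ℤ {θ | ∃ (Q : Subgroup G) (lam : Q → ℂ),
    IsIrreducibleCharacter lam ∧ m = Q.index ∧ inducedChar Q lam = θ}

theorem inducedChar_mem_inducedSpan {Q : Subgroup G} {lam : Q → ℂ}
    (hlam : IsIrreducibleCharacter lam) : inducedChar Q lam ∈ inducedSpan G Q.index :=
  Submodule.subset_span ⟨Q, lam, hlam, rfl, rfl⟩

theorem zSumInducedProperty_iff {p : ℕ} {P : Subgroup G} {χ : G → ℂ} {d : ℕ} :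
    ZSumInducedProperty p P χ d ↔ χ ∘ P.subtype ∈ inducedSpan P (p ^ d.factorization p) := by
  constructor
  · rintro ⟨n, c, Q, lam, hlam, hQ, hχ⟩
    have hsum : χ ∘ P.subtype = ∑ i, c i • inducedChar (Q i) (lam i) := by
      ext x
      simp [hχ]
    rw [hsum]
    exact Submodule.sum_smul_mem _ _ fun i _ => hQ i ▸ inducedChar_mem_inducedSpan (hlam i)
  · intro h
    obtain ⟨n, c, θ, hθ⟩ := Submodule.mem_span_set'.1 h
    choose Q lam hlam hQ hind using fun i => (θ i).2
    refine ⟨n, c, Q, lam, hlam, hQ, fun x => ?_⟩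
    simpa [hind] using (congrFun hθ x).symm

theorem comp_mulEquiv_mem_inducedSpan (e : G ≃* H) {m : ℕ} {θ : G → ℂ} (hθ : θ ∈ inducedSpan G m) :
    θ ∘ e.symm ∈ inducedSpan H m := by
  suffices inducedSpan G m ≤ (inducedSpan H m).comap (LinearMap.funLeft ℤ ℂ e.symm) from this hθ
  refine Submodule.span_le.2 ?_
  rintro _ ⟨Q, lam, hlam, rfl, rfl⟩
  change inducedChar Q lam ∘ e.symm ∈ inducedSpan H Q.index
  rw [← inducedChar_map_mulEquiv, ← Subgroup.index_map_equiv Q e]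
  exact inducedChar_mem_inducedSpan (hlam.comp_mulEquiv _)

theorem externalProduct_mem_inducedSpan {m n : ℕ} {θ : G → ℂ} {η : H → ℂ}
    (hθ : θ ∈ inducedSpan G m) (hη : η ∈ inducedSpan H n) :
    externalProduct ℂ G H θ η ∈ inducedSpan (G × H) (m * n) := by
  have hmem := Submodule.apply_mem_map₂ (externalProduct ℂ G H) hθ hη
  rw [inducedSpan, inducedSpan, Submodule.map₂_span_span] at hmem
  refine Submodule.span_le.2 ?_ hmem
  rintro _ ⟨_, ⟨Q₁, lam₁, hlam₁, rfl, rfl⟩, _, ⟨Q₂, lam₂, hlam₂, rfl, rfl⟩, rfl⟩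
  change externalProduct ℂ G H _ _ ∈ inducedSpan (G × H) _
  rw [← inducedChar_prod, ← Subgroup.index_prod]
  exact inducedChar_mem_inducedSpan ((hlam₁.externalProduct hlam₂).comp_mulEquiv _)

end InducedSpan

theorem ZSumInducedProperty.externalProduct {p : ℕ} {G₁ G₂ : Type} [Group G₁] [Group G₂]
    [Fintype G₁] [Fintype G₂] {P₁ : Subgroup G₁} {P₂ : Subgroup G₂} {χ₁ : G₁ → ℂ} {χ₂ : G₂ → ℂ}
    {d₁ d₂ : ℕ} (h₁ : ZSumInducedProperty p P₁ χ₁ d₁) (h₂ : ZSumInducedProperty p P₂ χ₂ d₂)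
    (hd₁ : d₁ ≠ 0) (hd₂ : d₂ ≠ 0) :
    ZSumInducedProperty p (P₁.prod P₂) (externalProduct ℂ G₁ G₂ χ₁ χ₂) (d₁ * d₂) := by
  rw [zSumInducedProperty_iff] at h₁ h₂ ⊢
  have hpart : p ^ (d₁ * d₂).factorization p = p ^ d₁.factorization p * p ^ d₂.factorization p := by
    rw [Nat.factorization_mul hd₁ hd₂, Finsupp.add_apply, pow_add]
  rw [hpart]
  exact comp_mulEquiv_mem_inducedSpan (Subgroup.prodEquiv P₁ P₂).symm
    (externalProduct_mem_inducedSpan h₁ h₂)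

theorem direct_product_reduction_general (p : ℕ) [Fact p.Prime] (G₁ G₂ : Type) [Group G₁] [Group G₂]
    [Fintype G₁] [Fintype G₂] (P₁ : Subgroup G₁) (P₂ : Subgroup G₂)
    (h₁ : ∀ V₁ : FDRep ℂ G₁, Simple V₁ →
      ZSumInducedProperty p P₁ V₁.character (Module.finrank ℂ V₁))
    (h₂ : ∀ V₂ : FDRep ℂ G₂, Simple V₂ →
      ZSumInducedProperty p P₂ V₂.character (Module.finrank ℂ V₂)) (V : FDRep ℂ (G₁ × G₂))
    (hV : Simple V) :
    ZSumInducedProperty p (P₁.prod P₂) V.character (Module.finrank ℂ V) := by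
  obtain ⟨V₁, V₂, hV₁, hV₂, ⟨i⟩⟩ := exists_iso_externalTensor V
  have hχ : V.character = externalProduct ℂ G₁ G₂ V₁.character V₂.character := by
    rw [← FDRep.char_iso i]
    exact funext (character_externalTensor V₁ V₂)
  have hd : Module.finrank ℂ V = Module.finrank ℂ V₁ * Module.finrank ℂ V₂ := by
    rw [← (FDRep.isoToLinearEquiv i).finrank_eq, finrank_externalTensor]
  rw [hχ, hd]
  exact (h₁ V₁ hV₁).externalProduct (h₂ V₂ hV₂) (finrank_ne_zero_of_simple V₁)
    (finrank_ne_zero_of_simple V₂)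

theorem direct_product_reduction
    (p : ℕ) [Fact p.Prime]
    (G₁ G₂ : Type) [Group G₁] [Group G₂] [Fintype G₁] [Fintype G₂]
    (P₁ : Sylow p G₁) (P₂ : Sylow p G₂)
    -- the property holds for every irreducible character of `G₁` and of `G₂`:
    (h₁ : ∀ (V₁ : FDRep ℂ G₁), CategoryTheory.Simple V₁ →
      ZSumInducedProperty p (P₁ : Subgroup G₁) V₁.character (Module.finrank ℂ V₁))
    (h₂ : ∀ (V₂ : FDRep ℂ G₂), CategoryTheory.Simple V₂ →
      ZSumInducedProperty p (P₂ : Subgroup G₂) V₂.character (Module.finrank ℂ V₂)) :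
    -- then it holds for every irreducible character of `G₁ × G₂`
    -- with respect to the Sylow `p`-subgroup `P₁ × P₂`:
    ∀ (V : FDRep ℂ (G₁ × G₂)), CategoryTheory.Simple V →
      ZSumInducedProperty p ((P₁ : Subgroup G₁).prod (P₂ : Subgroup G₂))
        V.character (Module.finrank ℂ V) :=
  direct_product_reduction_general p G₁ G₂ P₁ P₂ h₁ h₂
end

section
/- Let G be a finite group and let χ be an irreducible complex character of G that is faithful (ker(χ) = 1) and primitive (χ is not of the form ψ^G for any irreducible character ψ of any proper subgroup of G). Then every abelian normal subgroup N of G is cyclic and contained in the center Z(G) of G. -/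
open scoped Classical

/-!
Let `ρ` afford the character and let `N` be an abelian normal subgroup. Since `N` is abelian and
finite, `V` is the direct sum of the joint eigenspaces of `N`, and `G` permutes these as it permutes
the eigenvalue functions `μ : N → ℂ` by conjugation. If `W` is a nonzero joint eigenspace, with
eigenvalue function `μ`, and `H` is the stabilizer of `μ`, then the elements outside `H` move `W`
into the sum of the other joint eigenspaces.

With `p` the projection onto `W`, the operator `∑ x, ρ x⁻¹ p ρ x` commutes with `G` and is `|H|` on
`W`, so by irreducibility it is `|H|` on `V`; multiplying by `ρ g` and taking traces shows that
the character is induced from the character of `H` on `W`. Primitivity therefore forces `H = G`,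
hence `W = V`: the group `N` acts by scalars. By faithfulness `N` is central and embeds in `ℂˣ`,
so it is cyclic.
-/

section Irreducible

variable {k G V : Type*} [Field k] [Monoid G] [AddCommGroup V] [Module k V]
  {ρ : Representation k G V}

theorem isIrreducible_iff_forall_mem_invtSubmodule :
    ρ.IsIrreducible ↔ Nontrivial V ∧ ∀ U ∈ ρ.invtSubmodule, U = ⊥ ∨ U = ⊤ := by
  constructor
  · intro hρ
    refine ⟨?_, fun U hU => ?_⟩
    · by_contra hV
      rw [not_nontrivial_iff_subsingleton] at hV
      exact bot_ne_top (α := Subrepresentation ρ)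
        (Subrepresentation.toSubmodule_injective (Subsingleton.elim _ _))
    · let S : Subrepresentation ρ := ⟨U, ρ.mem_invtSubmodule.mp hU⟩
      exact (eq_bot_or_eq_top S).imp (congrArg Subrepresentation.toSubmodule)
        (congrArg Subrepresentation.toSubmodule)
  · rintro ⟨_, hU⟩
    have : Nontrivial (Subrepresentation ρ) :=
      ⟨⊥, ⊤, fun h => bot_ne_top (α := Submodule k V) (congrArg Subrepresentation.toSubmodule h)⟩
    refine ⟨fun S => ?_⟩
    have hS := hU S.toSubmodule (ρ.mem_invtSubmodule.mpr S.apply_mem_toSubmodule)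
    exact hS.imp (fun h => Subrepresentation.toSubmodule_injective h)
      (fun h => Subrepresentation.toSubmodule_injective h)

theorem nontrivial_of_isIrreducible (ρ : Representation k G V) [ρ.IsIrreducible] : Nontrivial V :=
  (isIrreducible_iff_forall_mem_invtSubmodule.mp ‹ρ.IsIrreducible›).1

theorem eq_top_of_mem_invtSubmodule [ρ.IsIrreducible] {U : Submodule k V}
    (hU : U ∈ ρ.invtSubmodule) (hU_ne : U ≠ ⊥) : U = ⊤ :=
  ((isIrreducible_iff_forall_mem_invtSubmodule.mp ‹ρ.IsIrreducible›).2 U hU).resolve_left hU_ne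

theorem iSup_map_eq_top_of_isIrreducible (ρ : Representation k G V) [ρ.IsIrreducible]
    {S : Submodule k V} (hS : S ≠ ⊥) : ⨆ g, S.map (ρ g) = ⊤ := by
  refine eq_top_of_mem_invtSubmodule (ρ.mem_invtSubmodule.mpr fun g => ?_) fun h => hS ?_
  · rw [Module.End.mem_invtSubmodule, ← Submodule.map_le_iff_le_comap, Submodule.map_iSup]
    refine iSup_le fun x => ?_
    rw [← Submodule.map_comp, ← Module.End.mul_eq_comp, ← map_mul]
    exact le_iSup (fun y => S.map (ρ y)) (g * x)
  · simpa [Module.End.one_eq_id] using iSup_eq_bot.mp h 1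

theorem eq_smul_id_of_forall_commute [ρ.IsIrreducible] {T : Module.End k V}
    (hT : ∀ g, Commute T (ρ g)) {c : k} (hc : T.HasEigenvalue c) : T = c • LinearMap.id := by
  have h_top : T.eigenspace c = ⊤ :=
    eq_top_of_mem_invtSubmodule
      (ρ.mem_invtSubmodule.mpr fun g => Module.End.mapsTo_genEigenspace_of_comm (hT g) c 1) hc
  ext v
  exact Module.End.mem_eigenspace_iff.mp (h_top ▸ Submodule.mem_top)

end Irreducible

section Simple

open CategoryTheory

universe u

theorem isIrreducible_of_simple {k G : Type*} [Field k] [Monoid G] (V : FDRep k G) [Simple V] :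
    Representation.IsIrreducible V.ρ := by
  refine isIrreducible_iff_forall_mem_invtSubmodule.mpr ⟨?_, fun U hU => ?_⟩
  · by_contra hV
    rw [not_nontrivial_iff_subsingleton] at hV
    refine Simple.not_isZero V ((Limits.IsZero.iff_id_eq_zero V).mpr ?_)
    ext v
    exact Subsingleton.elim (α := V) _ _
  let incl : FDRep.of (Subrepresentation.mk (ρ := V.ρ) U
      (Representation.mem_invtSubmodule V.ρ |>.mp hU)).toRepresentation ⟶ V :=
    ⟨InducedCategory.homMk (ModuleCat.ofHom U.subtype), fun g => by ext1; rfl⟩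
  have : Mono incl := by
    refine (forget₂ (FDRep k G) (Rep k G)).mono_of_mono_map ?_
    rw [Rep.mono_iff_injective]
    exact U.injective_subtype
  by_cases h_zero : incl = 0
  · left
    refine (Submodule.eq_bot_iff U).mpr fun u hu => ?_
    exact congrArg (fun f => f.hom.hom.hom (⟨u, hu⟩ : U)) h_zero
  · right
    have : IsIso incl := (Simple.mono_isIso_iff_nonzero incl).mpr h_zero
    refine Submodule.eq_top_iff'.mpr fun v => ?_
    have h_inv : (inv incl ≫ incl).hom.hom.hom v = v := by
      rw [IsIso.inv_hom_id]; rfl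
    rw [← h_inv]
    exact Subtype.property ((inv incl).hom.hom.hom v : U)

theorem simple_of_isIrreducible {k G V : Type u} [Field k] [IsAlgClosed k] [CharZero k] [Group G]
    [Finite G] [AddCommGroup V] [Module k V] [FiniteDimensional k V] (σ : Representation k G V)
    [σ.IsIrreducible] : Simple (FDRep.of σ) := by
  have := Fintype.ofFinite G
  have : Invertible (Nat.card G : k) := invertibleOfNonzero (by simp)
  rw [FDRep.simple_iff_char_is_norm_one]
  have h_norm := Representation.char_orthonormal σ σ
  rw [if_pos ⟨.refl _⟩, inv_mul_eq_iff_eq_mul₀ (by simp), mul_one] at h_norm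
  exact h_norm

end Simple

theorem commute_sum_conj {k G V : Type*} [CommSemiring k] [Group G] [Fintype G] [AddCommMonoid V]
    [Module k V] (ρ : Representation k G V) (p : Module.End k V) (g : G) :
    Commute (∑ x : G, ρ x⁻¹ * p * ρ x) (ρ g) := by
  rw [commute_iff_eq, Finset.sum_mul, Finset.mul_sum]
  refine Fintype.sum_equiv (Equiv.mulRight g) _ _ fun x => ?_
  simp only [Equiv.coe_mulRight, ← mul_assoc, ← map_mul, mul_inv_rev, mul_inv_cancel, one_mul]
  rw [mul_assoc, ← map_mul]

/-- `W` is a block of imprimitivity of `ρ` with stabilizer `H`: it is `H`-invariant and its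
translates by elements outside `H` lie in the complement `C`. Fixing one complement `C`, instead of
the full decomposition of `V` into translates of `W`, is enough to show that an irreducible `ρ` is
induced from the action of `H` on `W ≠ 0`. -/
structure IsImprimitivityBlock {k G V : Type*} [Field k] [Group G] [AddCommGroup V] [Module k V]
    (ρ : Representation k G V) (H : Subgroup G) (W C : Submodule k V) : Prop where
  isCompl : IsCompl W C
  apply_mem_of_mem : ∀ g ∈ H, ∀ w ∈ W, ρ g w ∈ W
  apply_mem_of_notMem : ∀ g ∉ H, ∀ w ∈ W, ρ g w ∈ C

namespace IsImprimitivityBlock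

variable {k G V : Type*} [Field k] [Group G] [AddCommGroup V] [Module k V]
  {ρ : Representation k G V} {H : Subgroup G} {W C : Submodule k V}

/-- The representation of `H` on the block `W`. -/
def restrict (hW : IsImprimitivityBlock ρ H W C) : Representation k H W :=
  (Subrepresentation.mk (ρ := ρ.comp H.subtype) W
    fun h w hw => hW.apply_mem_of_mem h h.2 w hw).toRepresentation

theorem projection_apply_of_mem (hW : IsImprimitivityBlock ρ H W C) {g : G} (hg : g ∈ H) {w : V}
    (hw : w ∈ W) : W.projection C hW.isCompl (ρ g w) = ρ g w :=
  Submodule.projection_apply_of_mem_left _ (hW.apply_mem_of_mem g hg w hw)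

theorem projection_apply_of_notMem (hW : IsImprimitivityBlock ρ H W C) {g : G} (hg : g ∉ H) {w : V}
    (hw : w ∈ W) : W.projection C hW.isCompl (ρ g w) = 0 :=
  (Submodule.projection_apply_eq_zero_iff _).mpr (hW.apply_mem_of_notMem g hg w hw)

theorem eq_top_of_subgroup_eq_top (hW : IsImprimitivityBlock ρ H W C) [ρ.IsIrreducible]
    (hW_ne : W ≠ ⊥) (hH : H = ⊤) : W = ⊤ :=
  eq_top_of_mem_invtSubmodule
    (ρ.mem_invtSubmodule.mpr fun g => hW.apply_mem_of_mem g (hH ▸ Subgroup.mem_top g)) hW_ne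

theorem projection_apply_mem_map_subtype (hW : IsImprimitivityBlock ρ H W C) {S : Submodule k W}
    (hS : S ∈ hW.restrict.invtSubmodule) (g : G) {s : W} (hs : s ∈ S) :
    W.projection C hW.isCompl (ρ g s) ∈ S.map W.subtype := by
  by_cases hg : g ∈ H
  · rw [hW.projection_apply_of_mem hg s.2]
    exact ⟨hW.restrict ⟨g, hg⟩ s, hW.restrict.mem_invtSubmodule.mp hS ⟨g, hg⟩ hs, rfl⟩
  · rw [hW.projection_apply_of_notMem hg s.2]
    exact zero_mem _

-- The `G`-translates of a nonzero `H`-invariant `S ≤ W` span `V`, and the projection onto `W`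
-- sends each of them into `S`.
theorem isIrreducible_restrict (hW : IsImprimitivityBlock ρ H W C) [ρ.IsIrreducible]
    (hW_ne : W ≠ ⊥) : hW.restrict.IsIrreducible := by
  refine isIrreducible_iff_forall_mem_invtSubmodule.mpr
    ⟨Submodule.nontrivial_iff_ne_bot.mpr hW_ne, fun S hS => or_iff_not_imp_left.mpr fun hS_ne => ?_⟩
  have h_span : ⨆ g, (S.map W.subtype).map (ρ g) = ⊤ :=
    iSup_map_eq_top_of_isIrreducible ρ fun h => hS_ne <|
      Submodule.map_injective_of_injective W.injective_subtype (h.trans (Submodule.map_bot _).symm)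
  have h_le : ⨆ g, (S.map W.subtype).map (ρ g) ≤
      (S.map W.subtype).comap (W.projection C hW.isCompl) := by
    refine iSup_le fun g => ?_
    rintro _ ⟨_, ⟨s, hs, rfl⟩, rfl⟩
    exact hW.projection_apply_mem_map_subtype hS g hs
  refine Submodule.eq_top_iff'.mpr fun w => ?_
  obtain ⟨s, hs, hsw⟩ := h_le (h_span ▸ Submodule.mem_top : (w : V) ∈ _)
  rw [Submodule.projection_apply_left] at hsw
  exact Subtype.ext hsw ▸ hs

theorem trace_projection_comp [FiniteDimensional k V] (hW : IsImprimitivityBlock ρ H W C) (g : G) :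
    LinearMap.trace k V (W.projection C hW.isCompl ∘ₗ ρ g) =
      if hg : g ∈ H then hW.restrict.character ⟨g, hg⟩ else 0 := by
  rw [Submodule.projection, LinearMap.comp_assoc, LinearMap.trace_comp_comm']
  split_ifs with hg
  · refine congrArg (LinearMap.trace k W) (LinearMap.ext fun w => Subtype.ext ?_)
    exact hW.projection_apply_of_mem hg w.2
  · rw [← map_zero (LinearMap.trace k W)]
    refine congrArg (LinearMap.trace k W) (LinearMap.ext fun w => Subtype.ext ?_)
    exact hW.projection_apply_of_notMem hg w.2

variable [Fintype G]

theorem sum_conj_projection_apply (hW : IsImprimitivityBlock ρ H W C) {w : V} (hw : w ∈ W) :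
    (∑ x : G, ρ x⁻¹ * W.projection C hW.isCompl * ρ x) w = (Nat.card H : k) • w := by
  have h_term (x : G) :
      (ρ x⁻¹ * W.projection C hW.isCompl * ρ x) w = if x ∈ H then w else 0 := by
    simp only [Module.End.mul_apply]
    split_ifs with hx
    · rw [hW.projection_apply_of_mem hx hw, Representation.inv_self_apply]
    · rw [hW.projection_apply_of_notMem hx hw, map_zero]
  simp only [LinearMap.sum_apply, h_term]
  rw [← Finset.sum_filter, Finset.sum_const, Nat.card_eq_fintype_card, Fintype.card_subtype,
    Nat.cast_smul_eq_nsmul]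

theorem sum_conj_projection (hW : IsImprimitivityBlock ρ H W C) [ρ.IsIrreducible]
    (hW_ne : W ≠ ⊥) :
    ∑ x : G, ρ x⁻¹ * W.projection C hW.isCompl * ρ x = (Nat.card H : k) • LinearMap.id := by
  obtain ⟨w, hw, hw_ne⟩ := W.ne_bot_iff.mp hW_ne
  exact eq_smul_id_of_forall_commute (commute_sum_conj ρ _)
    (Module.End.hasEigenvalue_of_hasEigenvector
      ⟨Module.End.mem_eigenspace_iff.mpr (hW.sum_conj_projection_apply hw), hw_ne⟩)

theorem card_mul_character [FiniteDimensional k V] (hW : IsImprimitivityBlock ρ H W C)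
    [ρ.IsIrreducible] (hW_ne : W ≠ ⊥) (g : G) :
    (Nat.card H : k) * ρ.character g = ∑ x : G,
      if hx : x * g * x⁻¹ ∈ H then hW.restrict.character ⟨x * g * x⁻¹, hx⟩ else 0 := by
  set p := W.projection C hW.isCompl
  calc (Nat.card H : k) * ρ.character g
      = LinearMap.trace k V ((∑ x : G, ρ x⁻¹ * p * ρ x) * ρ g) := by
        rw [hW.sum_conj_projection hW_ne, smul_mul_assoc, map_smul, smul_eq_mul]
        rfl
    _ = ∑ x : G, LinearMap.trace k V (p * ρ (x * g * x⁻¹)) := by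
        rw [Finset.sum_mul, map_sum]
        refine Finset.sum_congr rfl fun x _ => ?_
        rw [mul_assoc, mul_assoc, LinearMap.trace_mul_comm, mul_assoc, ← map_mul ρ, ← map_mul ρ]
    _ = _ := Finset.sum_congr rfl fun x _ => hW.trace_projection_comp _

end IsImprimitivityBlock

theorem IsImprimitivityBlock.exists_isIrreducibleCharacter_inducedChar {G V : Type} [Group G]
    [Fintype G] [AddCommGroup V] [Module ℂ V] [FiniteDimensional ℂ V] {ρ : Representation ℂ G V}
    {H : Subgroup G} {W C : Submodule ℂ V} (hW : IsImprimitivityBlock ρ H W C)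
    [ρ.IsIrreducible] (hW_ne : W ≠ ⊥) :
    ∃ ψ : H → ℂ, IsIrreducibleCharacter ψ ∧ ∀ g, ρ.character g = inducedChar H ψ g := by
  have := hW.isIrreducible_restrict hW_ne
  refine ⟨hW.restrict.character, ⟨_, simple_of_isIrreducible hW.restrict, rfl⟩, fun g => ?_⟩
  rw [inducedChar, eq_inv_mul_iff_mul_eq₀ (by simp), Fintype.card_eq_nat_card]
  exact hW.card_mul_character hW_ne g

theorem isSemisimple_of_pow_eq_one {k V : Type*} [Field k] [AddCommGroup V] [Module k V]
    {f : Module.End k V} {n : ℕ} (hn : (n : k) ≠ 0) (hf : f ^ n = 1) : f.IsSemisimple :=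
  Module.End.isSemisimple_of_squarefree_aeval_eq_zero
    (Polynomial.X_pow_sub_one_separable_iff.mpr hn).squarefree (by simp [hf])

/-- The subspace of `V` on which every `n ∈ N` acts as the scalar `μ n`. -/
def jointEigenspace {k G V : Type*} [CommRing k] [Group G] [AddCommGroup V] [Module k V]
    (ρ : Representation k G V) (N : Subgroup G) (μ : N → k) : Submodule k V :=
  ⨅ n : N, Module.End.eigenspace (ρ n) (μ n)

/-- The inertia group in `G` of a function `μ` on a normal subgroup `N`: the stabilizer of `μ`
under conjugation. -/
def inertiaSubgroup {k G : Type*} [Group G] {N : Subgroup G} [N.Normal] (μ : N → k) :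
    Subgroup G where
  carrier := {g | ∀ n, μ (MulAut.conjNormal g n) = μ n}
  one_mem' n := by simp
  mul_mem' {a b} ha hb n := by rw [map_mul, MulAut.mul_apply, ha, hb]
  inv_mem' {a} ha n := by rw [← ha, ← MulAut.mul_apply, ← map_mul]; simp

theorem mem_inertiaSubgroup {k G : Type*} [Group G] {N : Subgroup G} [N.Normal] {μ : N → k}
    {g : G} : g ∈ inertiaSubgroup μ ↔ ∀ n, μ (MulAut.conjNormal g n) = μ n :=
  Iff.rfl

section JointEigenspace

variable {k G V : Type*} [Field k] [Group G] [AddCommGroup V] [Module k V]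
  {ρ : Representation k G V} {N : Subgroup G} {μ : N → k}

theorem mem_jointEigenspace {v : V} :
    v ∈ jointEigenspace ρ N μ ↔ ∀ n : N, ρ n v = μ n • v := by
  simp [jointEigenspace]

theorem apply_mem_jointEigenspace [N.Normal] (g : G) {v : V} (hv : v ∈ jointEigenspace ρ N μ) :
    ρ g v ∈ jointEigenspace ρ N (μ ∘ MulAut.conjNormal g⁻¹) := by
  refine mem_jointEigenspace.mpr fun n => ?_
  have h_conj : (n : G) * g = g * (MulAut.conjNormal g⁻¹ n : N) := by simp [mul_assoc]
  rw [← Module.End.mul_apply, ← map_mul, h_conj, map_mul, Module.End.mul_apply,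
    mem_jointEigenspace.mp hv, map_smul, Function.comp_apply]

theorem exists_monoidHom_eq_of_jointEigenspace_ne_bot (hμ : jointEigenspace ρ N μ ≠ ⊥) :
    ∃ φ : N →* k, ⇑φ = μ := by
  obtain ⟨v, hv, hv_ne⟩ := (Submodule.ne_bot_iff _).mp hμ
  rw [mem_jointEigenspace] at hv
  refine ⟨⟨⟨μ, ?_⟩, fun a b => ?_⟩, rfl⟩ <;> refine smul_left_injective k hv_ne ?_
  · simp [← hv]
  · change μ (a * b) • v = (μ a * μ b) • v
    rw [mul_comm (μ a), mul_smul, ← hv a, ← map_smul, ← hv b, ← hv (a * b)]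
    simp

theorem isCyclic_of_jointEigenspace_eq_top [Finite N] [Nontrivial V] (hρ : Function.Injective ρ)
    (h_top : jointEigenspace ρ N μ = ⊤) : IsCyclic N := by
  obtain ⟨φ, rfl⟩ := exists_monoidHom_eq_of_jointEigenspace_ne_bot (h_top ▸ top_ne_bot)
  refine isCyclic_of_injective_ringHom φ fun a b hab => Subtype.ext (hρ ?_)
  ext v
  have hv : v ∈ jointEigenspace ρ N φ := h_top ▸ Submodule.mem_top
  rw [mem_jointEigenspace.mp hv a, mem_jointEigenspace.mp hv b, hab]

theorem le_center_of_jointEigenspace_eq_top (hρ : Function.Injective ρ)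
    (h_top : jointEigenspace ρ N μ = ⊤) : N ≤ Subgroup.center G := by
  have h_smul (n : N) (v : V) : ρ n v = μ n • v :=
    mem_jointEigenspace.mp (h_top ▸ Submodule.mem_top) n
  refine fun n hn => Subgroup.mem_center_iff.mpr fun g => hρ ?_
  ext v
  simp [h_smul ⟨n, hn⟩]

variable (ρ) (N) [IsMulCommutative N]

theorem commute_apply_of_isMulCommutative (a b : N) : Commute (ρ a) (ρ b) := by
  have hab : Commute (a : G) b := congrArg Subtype.val (mul_comm' a b)
  exact hab.map ρ

theorem iSupIndep_jointEigenspace : iSupIndep (jointEigenspace ρ N) :=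
  (Module.End.independent_iInf_maxGenEigenspace_of_forall_mapsTo (fun n : N => ρ n) fun a b =>
    Module.End.mapsTo_maxGenEigenspace_of_comm (commute_apply_of_isMulCommutative ρ N b a)).mono
      fun _ => iInf_mono fun _ => Module.End.genEigenspace_le_maximal _ _ 1

variable [IsAlgClosed k] [FiniteDimensional k V] [NeZero (Nat.card N : k)]

theorem iSup_jointEigenspace_eq_top : ⨆ μ, jointEigenspace ρ N μ = ⊤ := by
  have h_pow (n : N) : ρ n ^ Nat.card N = 1 := by
    rw [← map_pow, ← Subgroup.coe_pow, pow_card_eq_one', Subgroup.coe_one, map_one]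
  have h_eigenspace (μ : N → k) :
      ⨅ n : N, Module.End.maxGenEigenspace (ρ n) (μ n) = jointEigenspace ρ N μ :=
    iInf_congr fun n => (isSemisimple_of_pow_eq_one (NeZero.ne (Nat.card N : k))
      (h_pow n)).isFinitelySemisimple.maxGenEigenspace_eq_eigenspace _
  simp only [← h_eigenspace]
  exact Module.End.iSup_iInf_maxGenEigenspace_eq_top_of_iSup_maxGenEigenspace_eq_top_of_commute _
    (fun a b _ => commute_apply_of_isMulCommutative ρ N a b)
    fun _ => Module.End.iSup_maxGenEigenspace_eq_top _

theorem exists_jointEigenspace_ne_bot [Nontrivial V] : ∃ μ, jointEigenspace ρ N μ ≠ ⊥ := by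
  by_contra! h_bot
  simpa [h_bot] using iSup_jointEigenspace_eq_top ρ N

variable {N}

theorem isCompl_jointEigenspace (μ : N → k) :
    IsCompl (jointEigenspace ρ N μ) (⨆ (ν) (_ : ν ≠ μ), jointEigenspace ρ N ν) := by
  refine ⟨iSupIndep_jointEigenspace ρ N μ, codisjoint_iff.mpr ?_⟩
  rw [← iSup_split_single, iSup_jointEigenspace_eq_top]

theorem isImprimitivityBlock_jointEigenspace [N.Normal] (μ : N → k) :
    IsImprimitivityBlock ρ (inertiaSubgroup μ) (jointEigenspace ρ N μ)
      (⨆ (ν) (_ : ν ≠ μ), jointEigenspace ρ N ν) where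
  isCompl := isCompl_jointEigenspace ρ μ
  apply_mem_of_mem g hg v hv := by
    have h_fix : μ ∘ MulAut.conjNormal g⁻¹ = μ := funext (inv_mem hg)
    exact h_fix ▸ apply_mem_jointEigenspace g hv
  apply_mem_of_notMem g hg v hv := by
    have h_ne : μ ∘ MulAut.conjNormal g⁻¹ ≠ μ := fun h =>
      hg (inv_mem_iff.mp (mem_inertiaSubgroup.mpr (congrFun h)))
    exact Submodule.mem_iSup_of_mem _ (Submodule.mem_iSup_of_mem h_ne
      (apply_mem_jointEigenspace g hv))

end JointEigenspace

theorem injective_of_character_eq_character_one {k G V : Type*} [Field k] [Group G]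
    [AddCommGroup V] [Module k V] {ρ : Representation k G V}
    (hρ : ∀ g, ρ.character g = ρ.character 1 → g = 1) : Function.Injective ρ :=
  (injective_iff_map_eq_one ρ).mpr fun g hg => hρ g <| by
    simp only [Representation.character, hg, map_one]

theorem abelian_normal_subgroup_cyclic_central_of_faithful_primitive
    (G : Type) [Group G] [Fintype G]
    (V : FDRep ℂ G) (hV : CategoryTheory.Simple V)
    -- `χ = V.character` is faithful: its kernel is trivial.
    (hfaith : ∀ g : G, V.character g = V.character 1 → g = 1)
    -- `χ` is primitive: it is not induced from any proper subgroup.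
    (hprim : ¬ ∃ (H : Subgroup G), H ≠ ⊤ ∧ ∃ (ψ : ↥H → ℂ),
      IsIrreducibleCharacter ψ ∧ ∀ g : G, V.character g = inducedChar H ψ g)
    (N : Subgroup G) (hN : N.Normal)
    (habel : ∀ a ∈ N, ∀ b ∈ N, a * b = b * a) :
    IsCyclic ↥N ∧ N ≤ Subgroup.center G := by
  have : Representation.IsIrreducible V.ρ := isIrreducible_of_simple V
  have : Nontrivial V := nontrivial_of_isIrreducible V.ρ
  have : IsMulCommutative N := ⟨⟨fun a b => Subtype.ext (habel a a.2 b b.2)⟩⟩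
  obtain ⟨μ, hμ⟩ := exists_jointEigenspace_ne_bot V.ρ N
  have h_block := isImprimitivityBlock_jointEigenspace V.ρ μ
  have h_inertia : inertiaSubgroup μ = ⊤ := by
    by_contra h_proper
    exact hprim ⟨_, h_proper, h_block.exists_isIrreducibleCharacter_inducedChar hμ⟩
  have h_top := h_block.eq_top_of_subgroup_eq_top hμ h_inertia
  have h_inj := injective_of_character_eq_character_one (ρ := V.ρ) hfaith
  exact ⟨isCyclic_of_jointEigenspace_eq_top h_inj h_top,
    le_center_of_jointEigenspace_eq_top h_inj h_top⟩
end

section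
/- Let p be a prime and G a finite group. Assume that for every Sylow p-subgroup P of G and every irreducible character χ of G, the restriction χ_P is a sum of characters of the form λ^P induced from irreducible characters λ of subgroups Q ≤ P with χ(1)_p = |G : Q|_p. Then for every normal subgroup N of G, the quotient G/N has the same property: for every Sylow p-subgroup P̄ of G/N and every irreducible character χ̄ of G/N, the restriction χ̄_{P̄} is a sum of characters of the form μ^{P̄} induced from irreducible characters μ of subgroups Q̄ ≤ P̄ with χ̄(1)_p = |G/N : Q̄|_p. -/
open scoped Classical

/-- The restriction of `χ` (a character of degree `d` of the ambient group `G`) to the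
subgroup `P` is a sum of characters `λ^P` induced from irreducible characters `λ` of
subgroups `Q ≤ P` satisfying `d_p = |G : Q|_p` (the `p`-part of the degree equals the
`p`-part of the index of `Q` in the ambient group). -/
def SumInducedPropertyAmb (p : ℕ) {G : Type} [Group G] [Fintype G] (P : Subgroup G)
    (χ : G → ℂ) (d : ℕ) : Prop :=
  ∃ (n : ℕ) (Q : Fin n → Subgroup ↥P) (lam : (i : Fin n) → ↥(Q i) → ℂ),
    (∀ i, IsIrreducibleCharacter (lam i)) ∧
    (∀ i, p ^ (d.factorization p) = p ^ ((((Q i).map P.subtype).index).factorization p)) ∧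
    (∀ x : ↥P, χ ↑x = ∑ i, inducedChar (Q i) (lam i) x)

/-!
Lift `P̄` to a Sylow subgroup `P` of `G` and inflate `χ̄` to `χ`, so that `χ_P = ∑ λᵢ^P` with
`λᵢ ∈ Irr(Qᵢ)`. Since `χ` is constant on `M = P ∩ N`, averaging over `M` preserves `χ(1)`. On the
other hand the average of `λᵢ^P` over `M` is `|P : Qᵢ| · dim (λᵢ)^{Qᵢ ∩ M} / |M : Qᵢ ∩ M|`, which is
at most `λᵢ^P(1) = |P : Qᵢ| · λᵢ(1)`, with equality only if `M ≤ Qᵢ` and `M` acts trivially in `λᵢ`.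
Hence equality holds for every `i`, each `λᵢ` is inflated from `QᵢN/N`, and induction commutes with
inflation. Finally `Qᵢ ∩ N = P ∩ N` is a Sylow subgroup of `N`, so `|G : Qᵢ|` and `|G/N : QᵢN/N|`
have the same `p`-part.
-/

open CategoryTheory Finset Module
open scoped BigOperators

section Expect

variable {A B E : Type*} [Group A] [Fintype A] [Group B] [Fintype B]
  [AddCommMonoid E] [Module ℚ≥0 E]

-- Translating by `b` does not change the average over `A`; then average over `b` first.
theorem expect_comp_of_surjective (f : A →* B) (hf : Function.Surjective f) (F : B → E) :
    𝔼 a, F (f a) = 𝔼 b, F b := by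
  have translate (b : B) : 𝔼 a, F (b * f a) = 𝔼 a, F (f a) := by
    obtain ⟨c, rfl⟩ := hf b
    exact Fintype.expect_equiv (Equiv.mulLeft c) _ _ fun a => by simp
  calc 𝔼 a, F (f a) = 𝔼 b, 𝔼 a, F (b * f a) := by simp [translate]
    _ = 𝔼 a, 𝔼 b, F (b * f a) := expect_comm ..
    _ = 𝔼 _a : A, 𝔼 b, F b :=
      expect_congr rfl fun a _ => Fintype.expect_equiv (Equiv.mulRight (f a)) _ _ fun _ => rfl
    _ = 𝔼 b, F b := Fintype.expect_const _

theorem expect_expect_conj (M : Subgroup A) [M.Normal] (F : A → E) :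
    𝔼 x : M, 𝔼 y, F (y * x * y⁻¹) = 𝔼 x : M, F x := by
  have conj (y : A) : 𝔼 x : M, F (y * x * y⁻¹) = 𝔼 x : M, F x :=
    Fintype.expect_equiv (MulAut.conjNormal y).toEquiv _ _ fun _ => rfl
  rw [expect_comm]
  simp only [conj, Fintype.expect_const]

theorem expect_extend_val {K : Type*} [Field K] [CharZero K] (M Q : Subgroup A) (l : Q → K) :
    𝔼 x : M, Function.extend Subtype.val l 0 (x : A) =
      (𝔼 z : ↥(Q ⊓ M), l (Subgroup.inclusion inf_le_left z)) / Q.relIndex M := by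
  have sum_eq : ∑ z : ↥(Q ⊓ M), l (Subgroup.inclusion inf_le_left z) =
      ∑ x : M, Function.extend Subtype.val l 0 (x : A) := by
    refine Fintype.sum_of_injective (Subgroup.inclusion inf_le_right)
      (Subgroup.inclusion_injective _) _ _ (fun x hx => ?_) fun z => ?_
    · exact Function.extend_val_apply' fun hxQ => hx ⟨⟨x, hxQ, x.2⟩, rfl⟩
    · exact (Function.extend_val_apply (g := l) z.2.1).symm
  have card_eq : Fintype.card M = Fintype.card ↥(Q ⊓ M) * Q.relIndex M := by
    simpa only [Subgroup.relIndex_bot_left, Subgroup.inf_relIndex_right, Nat.card_eq_fintype_card]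
      using (Subgroup.relIndex_mul_relIndex ⊥ (Q ⊓ M) M bot_le inf_le_right).symm
  rw [Fintype.expect_eq_sum_div_card, Fintype.expect_eq_sum_div_card, sum_eq, card_eq,
    Nat.cast_mul, div_div]

end Expect

section InducedChar

variable {A B : Type*} [Group A] [Fintype A] [Group B] [Fintype B]

theorem inducedChar_eq_index_mul_expect (Q : Subgroup A) (l : Q → ℂ) (x : A) :
    inducedChar Q l x = Q.index * 𝔼 y, Function.extend Subtype.val l 0 (y * x * y⁻¹) := by
  have summand (y : A) : (if h : y * x * y⁻¹ ∈ Q then l ⟨y * x * y⁻¹, h⟩ else 0) =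
      Function.extend Subtype.val l 0 (y * x * y⁻¹) := by
    split_ifs with h
    · exact (Function.extend_val_apply h).symm
    · exact (Function.extend_val_apply' (g := l) (j := 0) h).symm
  have card_ne : (Nat.card Q : ℂ) ≠ 0 := Nat.cast_ne_zero.mpr Nat.card_pos.ne'
  have index_ne : (Q.index : ℂ) ≠ 0 := Nat.cast_ne_zero.mpr Subgroup.index_ne_zero_of_finite
  simp only [inducedChar, summand, Fintype.expect_eq_sum_div_card, Fintype.card_eq_nat_card,
    ← Q.card_mul_index, Nat.cast_mul]
  field_simp

theorem inducedChar_one (Q : Subgroup A) (l : Q → ℂ) : inducedChar Q l 1 = Q.index * l 1 := by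
  have extend_one : Function.extend Subtype.val l 0 1 = l 1 :=
    Function.extend_val_apply (g := l) Q.one_mem
  simp only [inducedChar_eq_index_mul_expect, mul_one, mul_inv_cancel, extend_one,
    Fintype.expect_const]

theorem inducedChar_map (f : A →* B) (hf : Function.Surjective f) {Q : Subgroup A}
    (hQ : f.ker ≤ Q) {l : Q → ℂ} {m : Q.map f → ℂ} (hm : ∀ q, m (f.subgroupMap Q q) = l q)
    (x : A) : inducedChar (Q.map f) m (f x) = inducedChar Q l x := by
  have extend_map (a : A) :
      Function.extend Subtype.val m 0 (f a) = Function.extend Subtype.val l 0 a := by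
    by_cases ha : a ∈ Q
    · rw [Function.extend_val_apply (Subgroup.mem_map_of_mem f ha), Function.extend_val_apply ha]
      exact hm ⟨a, ha⟩
    · have ha' : f a ∉ Q.map f := by
        rwa [← Subgroup.mem_comap, Subgroup.comap_map_eq_self hQ]
      rw [Function.extend_val_apply' ha', Function.extend_val_apply' ha, Pi.zero_apply,
        Pi.zero_apply]
  rw [inducedChar_eq_index_mul_expect, inducedChar_eq_index_mul_expect,
    Subgroup.index_map_eq Q hf hQ, ← expect_comp_of_surjective f hf]
  simp only [← extend_map, map_mul, map_inv]

theorem expect_character_eq_finrank_invariants {k V : Type*} [Field k] [CharZero k]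
    [AddCommGroup V] [Module k V] [FiniteDimensional k V] (ρ : Representation k A V) :
    𝔼 a, ρ.character a = finrank k ρ.invariants := by
  have := invertibleOfNonzero (NeZero.ne (Nat.card A : k))
  rw [← ρ.card_inv_mul_sum_char_eq_finrank, Fintype.expect_eq_sum_div_card,
    Fintype.card_eq_nat_card, div_eq_inv_mul]

/-- The fixed space `V^{Q ∩ M}` of a representation `V` of `Q`, with `Q ∩ M` encoded as the subgroup
`Q ⊓ M` of the ambient group. Its dimension governs the average over `M` of the induced
character. -/
noncomputable abbrev fixedSpace (M Q : Subgroup A) {k V : Type*} [CommRing k] [AddCommGroup V]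
    [Module k V] (ρ : Representation k Q V) : Submodule k V :=
  Representation.invariants (ρ.comp (Subgroup.inclusion (inf_le_left : Q ⊓ M ≤ Q)))

theorem expect_inducedChar_character (M : Subgroup A) [M.Normal] (Q : Subgroup A)
    {V : Type*} [AddCommGroup V] [Module ℂ V] [FiniteDimensional ℂ V]
    (ρ : Representation ℂ Q V) :
    𝔼 x : M, inducedChar Q ρ.character (x : A) =
      Q.index * (finrank ℂ (fixedSpace M Q ρ) / Q.relIndex M) := by
  simp only [inducedChar_eq_index_mul_expect, ← mul_expect]
  rw [expect_expect_conj, expect_extend_val, ← expect_character_eq_finrank_invariants]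
  rfl

end InducedChar

section Kernel

variable {A : Type*} [Group A] [Finite A] (M Q : Subgroup A)
  {k V : Type*} [Field k] [AddCommGroup V] [Module k V] [FiniteDimensional k V]
  (ρ : Representation k Q V)

theorem finrank_fixedSpace_div_relIndex_le :
    (finrank k (fixedSpace M Q ρ) : ℝ) / Q.relIndex M ≤ finrank k V := by
  have one_le : 1 ≤ Q.relIndex M := Nat.one_le_iff_ne_zero.mpr Subgroup.index_ne_zero_of_finite
  exact (div_le_self (Nat.cast_nonneg _) (mod_cast one_le)).trans
    (mod_cast Submodule.finrank_le _)

theorem le_and_subgroupOf_le_ker_of_finrank_fixedSpace_div_relIndex_eq [Nontrivial V]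
    (h : (finrank k (fixedSpace M Q ρ) : ℝ) / Q.relIndex M = finrank k V) :
    M ≤ Q ∧ M.subgroupOf Q ≤ MonoidHom.ker ρ := by
  have relIndex_ne : Q.relIndex M ≠ 0 := Subgroup.index_ne_zero_of_finite
  have finrank_eq : finrank k (fixedSpace M Q ρ) = finrank k V * Q.relIndex M := by
    rw [div_eq_iff (mod_cast relIndex_ne)] at h
    exact_mod_cast h
  have relIndex_eq : Q.relIndex M = 1 := by
    have := (fixedSpace M Q ρ).finrank_le
    have : 0 < finrank k V := finrank_pos
    exact le_antisymm (by nlinarith) (Nat.one_le_iff_ne_zero.mpr relIndex_ne)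
  have fixedSpace_eq_top : fixedSpace M Q ρ = ⊤ :=
    Submodule.eq_top_of_finrank_eq (by rw [finrank_eq, relIndex_eq, mul_one])
  refine ⟨Subgroup.relIndex_eq_one.mp relIndex_eq, fun q hq => LinearMap.ext fun v => ?_⟩
  exact (fixedSpace_eq_top ▸ Submodule.mem_top : v ∈ fixedSpace M Q ρ) ⟨q, q.2, hq⟩

end Kernel

-- By `h` the value of the sum at `1` equals its average over `M`; averaging increases no summand,
-- so it preserves each of them.
theorem le_and_subgroupOf_le_ker_of_sum_inducedChar_eq {A : Type*} [Group A] [Fintype A]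
    (M : Subgroup A) [M.Normal] {ι : Type*} [Fintype ι] (Q : ι → Subgroup A) {V : ι → Type*}
    [∀ i, AddCommGroup (V i)] [∀ i, Module ℂ (V i)] [∀ i, FiniteDimensional ℂ (V i)]
    [∀ i, Nontrivial (V i)] (ρ : ∀ i, Representation ℂ (Q i) (V i))
    (h : ∀ x ∈ M, ∑ i, inducedChar (Q i) (ρ i).character x =
      ∑ i, inducedChar (Q i) (ρ i).character 1) (i : ι) :
    M ≤ Q i ∧ M.subgroupOf (Q i) ≤ MonoidHom.ker (ρ i) := by
  let average (i : ι) : ℝ := finrank ℂ (fixedSpace M (Q i) (ρ i)) / (Q i).relIndex M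
  have sum_eq : ∑ i, (Q i).index * average i = ∑ i, ((Q i).index * finrank ℂ (V i) : ℝ) := by
    have expect_eq : ∑ i, 𝔼 x : M, inducedChar (Q i) (ρ i).character (x : A) =
        ∑ i, inducedChar (Q i) (ρ i).character 1 := by
      rw [← expect_sum_comm, expect_congr rfl fun (x : M) _ => h x x.2, Fintype.expect_const]
    simp only [expect_inducedChar_character, inducedChar_one, Representation.char_one] at expect_eq
    apply Complex.ofReal_injective
    simpa [average] using expect_eq
  have term_le (i : ι) : (Q i).index * average i ≤ ((Q i).index * finrank ℂ (V i) : ℝ) :=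
    mul_le_mul_of_nonneg_left (finrank_fixedSpace_div_relIndex_le M (Q i) (ρ i))
      (Nat.cast_nonneg _)
  have term_eq := (sum_eq_sum_iff_of_le fun i _ => term_le i).mp sum_eq i (mem_univ i)
  exact le_and_subgroupOf_le_ker_of_finrank_fixedSpace_div_relIndex_eq M (Q i) (ρ i)
    (mul_left_cancel₀ (Nat.cast_ne_zero.mpr Subgroup.index_ne_zero_of_finite) term_eq)

section Simple

universe u

theorem nontrivial_of_simple {k : Type u} [Field k] {A : Type*} [Monoid A] (V : FDRep k A)
    [Simple V] : Nontrivial V := by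
  by_contra h
  rw [not_nontrivial_iff_subsingleton] at h
  exact id_nonzero V (by ext v; exact Subsingleton.elim _ _)

theorem simple_iff_expect_character_mul_character_inv {k A : Type u} [Field k]
    [IsAlgClosed k] [CharZero k] [Group A] [Fintype A] (V : FDRep k A) :
    Simple V ↔ 𝔼 a, V.character a * V.character a⁻¹ = 1 := by
  rw [FDRep.simple_iff_char_is_norm_one, Fintype.expect_eq_sum_div_card,
    div_eq_one_iff_eq (Nat.cast_ne_zero.mpr Fintype.card_ne_zero), Fintype.card_eq_nat_card]

variable {k A B : Type u} [Field k] [IsAlgClosed k] [CharZero k] [Group A] [Finite A]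
  [Group B] [Finite B]

theorem simple_iff_of_character_comp (f : A →* B) (hf : Function.Surjective f)
    {V : FDRep k A} {W : FDRep k B}
    (h : ∀ a, W.character (f a) = V.character a) : Simple V ↔ Simple W := by
  have := Fintype.ofFinite A
  have := Fintype.ofFinite B
  rw [simple_iff_expect_character_mul_character_inv,
    simple_iff_expect_character_mul_character_inv, ← expect_comp_of_surjective f hf]
  simp only [← map_inv, h]

theorem exists_simple_character_comp_eq (f : A →* B) (hf : Function.Surjective f)
    (V : FDRep k A) [Simple V] (hV : f.ker ≤ MonoidHom.ker V.ρ) :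
    ∃ U : FDRep k B, Simple U ∧ ∀ a, U.character (f a) = V.character a := by
  let σ : Representation k B V := (Units.coeHom _).comp <|
    f.liftOfSurjective hf ⟨Representation.asGroupHom V.ρ, fun a ha => Units.ext (hV ha)⟩
  have σ_comp (a : A) : σ (f a) = V.ρ a :=
    congrArg Units.val (f.liftOfRightInverse_comp_apply _ (Function.rightInverse_surjInv hf) _ a)
  have character_eq (a : A) : (FDRep.of σ).character (f a) = V.character a :=
    congrArg (LinearMap.trace k V) (σ_comp a)
  exact ⟨FDRep.of σ, (simple_iff_of_character_comp f hf character_eq).mp ‹_›, character_eq⟩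

end Simple

section Index

theorem not_dvd_relIndex_of_inf_le {G : Type*} [Group G] {p : ℕ} {P K N : Subgroup G}
    (hP : ¬ p ∣ P.relIndex N) (hK : P ⊓ N ≤ K) : ¬ p ∣ K.relIndex N := fun h => hP <|
  h.trans <| Subgroup.inf_relIndex_right P N ▸ Subgroup.relIndex_dvd_of_le_left N hK

variable {G H : Type*} [Group G] [Finite G] [Group H] (f : G →* H)

theorem index_map_mul_relIndex_ker (hf : Function.Surjective f) (K : Subgroup G) :
    (K.map f).index * K.relIndex f.ker = K.index := by
  have relIndex_sup : K.relIndex (K ⊔ f.ker) = K.relIndex f.ker := by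
    have via_left :=
      Subgroup.relIndex_mul_relIndex (K ⊓ f.ker) K (K ⊔ f.ker) inf_le_left le_sup_left
    have via_right :=
      Subgroup.relIndex_mul_relIndex (K ⊓ f.ker) f.ker (K ⊔ f.ker) inf_le_right le_sup_right
    rw [Subgroup.inf_relIndex_left] at via_left
    rw [Subgroup.inf_relIndex_right, Subgroup.relIndex_sup_right, ← via_left, mul_comm] at via_right
    exact (mul_left_cancel₀ Subgroup.index_ne_zero_of_finite via_right).symm
  rw [Subgroup.index_map, MonoidHom.range_eq_top.mpr hf, Subgroup.index_top, mul_one,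
    ← relIndex_sup, mul_comm, Subgroup.relIndex_mul_index le_sup_left]

theorem factorization_index_map (hf : Function.Surjective f) {p : ℕ} {K : Subgroup G}
    (hK : ¬ p ∣ K.relIndex f.ker) :
    (K.map f).index.factorization p = K.index.factorization p := by
  have index_ne : (K.map f).index ≠ 0 :=
    ne_zero_of_dvd_ne_zero Subgroup.index_ne_zero_of_finite (Subgroup.index_map_dvd K hf)
  have relIndex_ne : K.relIndex f.ker ≠ 0 := Subgroup.index_ne_zero_of_finite
  rw [← index_map_mul_relIndex_ker f hf K, Nat.factorization_mul index_ne relIndex_ne,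
    Finsupp.add_apply, Nat.factorization_eq_zero_of_not_dvd hK, add_zero]

theorem sylow_not_dvd_relIndex_ker (hf : Function.Surjective f) {p : ℕ} [Fact p.Prime]
    (P : Sylow p G) : ¬ p ∣ (P : Subgroup G).relIndex f.ker := fun h =>
  P.not_dvd_index <| index_map_mul_relIndex_ker f hf (P : Subgroup G) ▸ h.mul_left _

end Index

theorem ker_le_and_exists_inducedChar_map_eq
    {A B : Type} [Group A] [Fintype A] [Group B] [Fintype B]
    (f : A →* B) (hf : Function.Surjective f) {ι : Type*} [Fintype ι] {Q : ι → Subgroup A}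
    {l : ∀ i, Q i → ℂ} (hl : ∀ i, IsIrreducibleCharacter (l i))
    (h : ∀ x ∈ f.ker, ∑ i, inducedChar (Q i) (l i) x = ∑ i, inducedChar (Q i) (l i) 1) (i : ι) :
    f.ker ≤ Q i ∧ ∃ m : (Q i).map f → ℂ, IsIrreducibleCharacter m ∧
      ∀ x, inducedChar ((Q i).map f) m (f x) = inducedChar (Q i) (l i) x := by
  choose V V_simple l_eq using hl
  obtain rfl : l = fun i => (V i).character := funext l_eq
  have V_nontrivial (i : ι) : Nontrivial (V i) := nontrivial_of_simple (V i)
  obtain ⟨ker_le, ker_acts_trivially⟩ :=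
    le_and_subgroupOf_le_ker_of_sum_inducedChar_eq f.ker Q (fun i => (V i).ρ) h i
  obtain ⟨U, U_simple, U_character⟩ :=
    exists_simple_character_comp_eq (f.subgroupMap (Q i)) (f.subgroupMap_surjective (Q i)) (V i)
      (((Q i).ker_subgroupMap f).trans_le ker_acts_trivially)
  exact ⟨ker_le, U.character, ⟨U, U_simple, rfl⟩, inducedChar_map f hf ker_le U_character⟩

theorem SumInducedPropertyAmb.map {G H : Type} [Group G] [Fintype G] [Group H] [Fintype H]
    (f : G →* H) (hf : Function.Surjective f) {p : ℕ} {P : Subgroup G}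
    (hP : ¬ p ∣ P.relIndex f.ker) {χ : H → ℂ} {d : ℕ}
    (h : SumInducedPropertyAmb p P (χ ∘ f) d) : SumInducedPropertyAmb p (P.map f) χ d := by
  obtain ⟨n, Q, lam, irreducible, degree, sum_eq⟩ := h
  let g : P →* P.map f := f.subgroupMap P
  have g_surjective : Function.Surjective g := f.subgroupMap_surjective P
  have constant_on_ker : ∀ x ∈ g.ker,
      ∑ i, inducedChar (Q i) (lam i) x = ∑ i, inducedChar (Q i) (lam i) 1 := fun x hx => by
    have f_eq : f x = f (1 : P) := congrArg Subtype.val (hx.trans (map_one g).symm)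
    rw [← sum_eq, ← sum_eq, Function.comp_apply, Function.comp_apply, f_eq]
  choose ker_le mu mu_irreducible mu_induced using
    ker_le_and_exists_inducedChar_map_eq g g_surjective irreducible constant_on_ker
  refine ⟨n, fun i => (Q i).map g, mu, mu_irreducible, fun i => ?_, fun y => ?_⟩
  · have inf_le : P ⊓ f.ker ≤ (Q i).map P.subtype := fun x hx =>
      ⟨⟨x, hx.1⟩, ker_le i (Subtype.ext hx.2), rfl⟩
    have map_eq : ((Q i).map g).map (P.map f).subtype = ((Q i).map P.subtype).map f := by
      rw [Subgroup.map_map, Subgroup.map_map]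
      rfl
    rw [degree i, map_eq, factorization_index_map f hf (not_dvd_relIndex_of_inf_le hP inf_le)]
  · obtain ⟨x, rfl⟩ := g_surjective y
    exact (sum_eq x).trans (sum_congr rfl fun i _ => (mu_induced i x).symm)

theorem strong_form_passes_to_quotients
    (p : ℕ) [Fact p.Prime] (G : Type) [Group G] [Fintype G]
    -- the strong form of the conjecture holds for `G`:
    (hyp : ∀ (P : Sylow p G) (V : FDRep ℂ G), CategoryTheory.Simple V →
      SumInducedPropertyAmb p (P : Subgroup G) V.character (Module.finrank ℂ V)) :
    -- then it also holds for every quotient of `G`: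
    ∀ (N : Subgroup G) (_ : N.Normal) (Pbar : Sylow p (G ⧸ N))
      (W : FDRep ℂ (G ⧸ N)), CategoryTheory.Simple W →
      SumInducedPropertyAmb p (Pbar : Subgroup (G ⧸ N)) W.character
        (Module.finrank ℂ W) := by
  intro N _ Pbar W hW
  let π : G →* G ⧸ N := QuotientGroup.mk' N
  have π_surjective : Function.Surjective π := QuotientGroup.mk'_surjective N
  obtain ⟨P, rfl⟩ := Sylow.mapSurjective_surjective π_surjective p Pbar
  let inflation : FDRep ℂ G := FDRep.of (W.ρ.comp π)
  have inflation_simple : Simple inflation :=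
    (simple_iff_of_character_comp π π_surjective fun _ => rfl).mpr hW
  exact SumInducedPropertyAmb.map (χ := W.character) π π_surjective
    (sylow_not_dvd_relIndex_ker π π_surjective P) (hyp P inflation inflation_simple)
end
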